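/- The core of the arboricity game Γ_G is nonempty if and only if the fractional arboricity of G equals its arboricity, i.e., a_f(G) = a(G). -/

import Mathlib

open scoped BigOperators

variable {V : Type*}

/-- Density of a subgraph: m(H)/(n(H)-1). -/
noncomputable def density (G : SimpleGraph V) (H : G.Subgraph) : ℝ :=
  (H.edgeSet.ncard : ℝ) / ((H.verts.ncard : ℝ) - 1)

/-- Fractional arboricity: maximum density over connected subgraphs. -/
noncomputable def fracArboricity (G : SimpleGraph V) : ℝ :=
  sSup {d : ℝ | ∃ H : G.Subgraph, H.Connected ∧ d = density G H}

/-- A densest subgraph: connected, attaining the maximum density. -/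
def IsDensest (G : SimpleGraph V) (H : G.Subgraph) : Prop :=
  H.Connected ∧ density G H = fracArboricity G

/-- A minimal densest subgraph: no proper subgraph is densest. -/
def IsMinimalDensest (G : SimpleGraph V) (H : G.Subgraph) : Prop :=
  IsDensest G H ∧ ∀ K : G.Subgraph, K < H → ¬ IsDensest G K
/-- A set of edges is a forest if the graph it spans is acyclic. -/
def IsForestEdgeSet (F : Set (Sym2 V)) : Prop :=
  (SimpleGraph.fromEdgeSet F).IsAcyclic

/-- Arboricity of an edge set: minimum number of forests covering it. -/
noncomputable def arboricity (S : Set (Sym2 V)) : ℕ :=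
  sInf {k : ℕ | ∃ F : Fin k → Set (Sym2 V),
    (∀ i, IsForestEdgeSet (F i)) ∧ S ⊆ ⋃ i, F i}

/-- A spanning tree of `G`, as a subgraph. -/
def IsSpanningTree (G : SimpleGraph V) (T : G.Subgraph) : Prop :=
  T.IsSpanning ∧ T.coe.IsTree

/-- Membership in the core of the arboricity game on `G`:
nonnegative, efficient, and no coalition pays more than its arboricity. -/
def inCore (G : SimpleGraph V) (x : Sym2 V → ℝ) : Prop :=
  (∀ e, 0 ≤ x e) ∧ (∑ᶠ e ∈ G.edgeSet, x e) = (arboricity G.edgeSet : ℝ) ∧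
    ∀ S : Set (Sym2 V), S ⊆ G.edgeSet → (∑ᶠ e ∈ S, x e) ≤ (arboricity S : ℝ)

/-!
A core element is the same thing as a nonnegative edge weighting `x` with `x(F) ≤ 1` on every forest
`F` and `x(E) = a(G)`: a set covered by `k` forests then has weight at most `k`. So the core is
nonempty iff the largest weight of such a packing is `a(G)`, and it is at most `a(G)` anyway. By LP
duality that largest weight is `a_f(G)`. It is attained by the uniform weight `1 / (n(H) - 1)` on a
densest subgraph `H`, because a forest has at most `n(H) - 1` edges in `H`. Conversely the greedy
algorithm for the forest matroid finds, for every `x ≥ 0`, a forest `F` with `x(E) ≤ a_f(G) x(F)`;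
for uniform weights this says that a spanning forest has at least `m / a_f(G)` edges, which is the
density bound summed over the components.
-/

section Density

variable {G : SimpleGraph V}

theorem ncard_edgeSet_coe (H : G.Subgraph) : H.coe.edgeSet.ncard = H.edgeSet.ncard := by
  rw [← H.image_coe_edgeSet_coe,
    Set.ncard_image_of_injective _ (Sym2.map.injective Subtype.val_injective)]

theorem ncard_verts_le_of_connected {H : G.Subgraph} (hH : H.Connected) :
    H.verts.ncard ≤ H.edgeSet.ncard + 1 := by
  simpa only [Nat.card_coe_set_eq, ncard_edgeSet_coe] using
    hH.coe.card_vert_le_card_edgeSet_add_one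

theorem finite_verts_of_connected {H : G.Subgraph} (hH : H.Connected) (hE : H.edgeSet.Finite) :
    H.verts.Finite := by
  classical
  rcases H.verts.subsingleton_or_nontrivial with hsub | hnt
  · exact hsub.finite
  have := hnt.coe_sort
  refine (hE.biUnion fun e _ ↦ e.toFinset.finite_toSet).subset fun v hv ↦ ?_
  obtain ⟨w, hvw⟩ := hH.preconnected.exists_adj_of_nontrivial ⟨v, hv⟩
  exact Set.mem_biUnion (H.mem_edgeSet.2 hvw) (by simp)

theorem ncard_edgeSet_add_one_le_of_isAcyclic {H : G.Subgraph} (hH : H.coe.IsAcyclic)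
    (hne : H.verts.Nonempty) (hfin : H.verts.Finite) :
    H.edgeSet.ncard + 1 ≤ H.verts.ncard := by
  have := hne.to_subtype
  have := hfin.to_subtype
  obtain ⟨T, hHT, -, hT⟩ :=
    SimpleGraph.connected_top.exists_isTree_le_of_le_of_isAcyclic le_top hH
  calc H.edgeSet.ncard + 1 = H.coe.edgeSet.ncard + 1 := by
        rw [ncard_edgeSet_coe]
    _ ≤ T.edgeSet.ncard + 1 := by
        gcongr
        exact T.edgeSet.toFinite
    _ = H.verts.ncard := by
        simpa only [Nat.card_coe_set_eq] using (SimpleGraph.isTree_iff_connected_and_card.1 hT).2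

/-- This includes single vertices, where the density is the junk value `0 / 0 = 0`. -/
theorem density_mul_ncard_verts_sub_one (H : G.Subgraph) :
    density G H * ((H.verts.ncard : ℝ) - 1) = H.edgeSet.ncard := by
  rcases eq_or_ne H.verts.ncard 1 with h1 | h1
  · obtain ⟨v, hv⟩ := Set.ncard_eq_one.1 h1
    have : Subsingleton H.verts := by rw [hv]; infer_instance
    have hle := ncard_edgeSet_add_one_le_of_isAcyclic (H := H) .of_subsingleton
      (hv ▸ Set.singleton_nonempty v) (hv ▸ Set.finite_singleton v)
    have hE : H.edgeSet.ncard = 0 := by lia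
    simp [h1, hE]
  · exact div_mul_cancel₀ _ (sub_ne_zero.2 (by exact_mod_cast h1))

variable [Finite G.edgeSet]

theorem one_le_ncard_verts_of_connected {H : G.Subgraph} (hH : H.Connected) :
    1 ≤ H.verts.ncard :=
  have hE : H.edgeSet.Finite := G.edgeSet.toFinite.subset H.edgeSet_subset
  (Set.ncard_pos (finite_verts_of_connected hH hE)).2 hH.nonempty

theorem density_nonneg_of_connected {H : G.Subgraph} (hH : H.Connected) : 0 ≤ density G H :=
  div_nonneg (Nat.cast_nonneg _)
    (sub_nonneg.2 (by exact_mod_cast one_le_ncard_verts_of_connected hH))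

variable (G) in
theorem finite_setOf_density_connected :
    {d : ℝ | ∃ H : G.Subgraph, H.Connected ∧ d = density G H}.Finite := by
  let m := G.edgeSet.ncard
  refine ((Set.finite_Iic m).image2 (fun a b : ℕ ↦ (a : ℝ) / ((b : ℝ) - 1))
    (Set.finite_Iic (m + 1))).subset ?_
  rintro d ⟨H, hH, rfl⟩
  have hm : H.edgeSet.ncard ≤ m := Set.ncard_le_ncard H.edgeSet_subset
  have hn : H.verts.ncard ≤ m + 1 := (ncard_verts_le_of_connected hH).trans (by lia)
  exact Set.mem_image2_of_mem hm hn

theorem density_le_fracArboricity {H : G.Subgraph} (hH : H.Connected) :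
    density G H ≤ fracArboricity G :=
  le_csSup (finite_setOf_density_connected G).bddAbove ⟨H, hH, rfl⟩

variable (G) in
theorem fracArboricity_nonneg : 0 ≤ fracArboricity G :=
  Real.sSup_nonneg (by rintro d ⟨H, hH, rfl⟩; exact density_nonneg_of_connected hH)

theorem ncard_edgeSet_le_fracArboricity_mul {H : G.Subgraph} (hH : H.Connected) :
    (H.edgeSet.ncard : ℝ) ≤ fracArboricity G * ((H.verts.ncard : ℝ) - 1) := by
  have hn : (1 : ℝ) ≤ H.verts.ncard := by exact_mod_cast one_le_ncard_verts_of_connected hH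
  rw [← density_mul_ncard_verts_sub_one]
  exact mul_le_mul_of_nonneg_right (density_le_fracArboricity hH) (sub_nonneg.2 hn)

theorem fracArboricity_mono {K : SimpleGraph V} (hKG : K ≤ G) :
    fracArboricity K ≤ fracArboricity G := by
  refine Real.sSup_le ?_ (fracArboricity_nonneg G)
  rintro d ⟨H, hH, rfl⟩
  let H' : G.Subgraph := ⟨H.verts, H.Adj, fun h ↦ hKG (H.adj_sub h), H.edge_vert, H.symm⟩
  have hH' : H'.Connected := ⟨hH.coe⟩
  exact density_le_fracArboricity hH'

variable (G) in
theorem exists_isDensest [Nonempty V] : ∃ H : G.Subgraph, IsDensest G H := by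
  obtain ⟨v⟩ := ‹Nonempty V›
  have hne : {d : ℝ | ∃ H : G.Subgraph, H.Connected ∧ d = density G H}.Nonempty :=
    ⟨_, G.singletonSubgraph v, SimpleGraph.Subgraph.singletonSubgraph_connected, rfl⟩
  obtain ⟨H, hH, hd⟩ := hne.csSup_mem (finite_setOf_density_connected G)
  exact ⟨H, hH, hd.symm⟩

end Density

section Forest

theorem IsForestEdgeSet.mono {F F' : Set (Sym2 V)} (hF : IsForestEdgeSet F) (h : F' ⊆ F) :
    IsForestEdgeSet F' :=
  SimpleGraph.IsAcyclic.anti (SimpleGraph.fromEdgeSet_mono h) hF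

theorem IsForestEdgeSet.singleton (e : Sym2 V) : IsForestEdgeSet {e} := by
  induction e with | _ u v
  have h := (SimpleGraph.isAcyclic_sup_fromEdgeSet_iff (G := ⊥) (u := u) (v := v)).2
    ⟨SimpleGraph.isAcyclic_bot, fun h ↦ .inl (SimpleGraph.reachable_bot.1 h)⟩
  rwa [bot_sup_eq] at h

theorem IsForestEdgeSet.arboricity_le_one {F : Set (Sym2 V)} (hF : IsForestEdgeSet F) :
    arboricity F ≤ 1 :=
  Nat.sInf_le ⟨fun _ ↦ F, fun _ ↦ hF, (Set.iUnion_const F).ge⟩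

theorem exists_isForestEdgeSet_cover {S : Set (Sym2 V)} (hS : S.Finite) :
    ∃ F : Fin (arboricity S) → Set (Sym2 V), (∀ i, IsForestEdgeSet (F i)) ∧ S ⊆ ⋃ i, F i := by
  have := hS.to_subtype
  refine Nat.sInf_mem (s := {k : ℕ | ∃ F : Fin k → Set (Sym2 V),
    (∀ i, IsForestEdgeSet (F i)) ∧ S ⊆ ⋃ i, F i})
    ⟨Nat.card S, fun i ↦ {((Finite.equivFin S).symm i : Sym2 V)}, fun i ↦ .singleton _, ?_⟩
  exact fun e he ↦ Set.mem_iUnion.2 ⟨Finite.equivFin S ⟨e, he⟩,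
    by rw [Set.mem_singleton_iff, Equiv.symm_apply_apply]⟩

theorem IsForestEdgeSet.ncard_inter_edgeSet_add_one_le {G : SimpleGraph V} {F : Set (Sym2 V)}
    (hF : IsForestEdgeSet F) {H : G.Subgraph} (hne : H.verts.Nonempty) (hfin : H.verts.Finite) :
    (F ∩ H.edgeSet).ncard + 1 ≤ H.verts.ncard := by
  let T := H.deleteEdges Fᶜ
  have hT : T.edgeSet = F ∩ H.edgeSet := by
    ext e
    induction e with | _ u v
    simp [T, and_comm]
  let f : T.coe →g SimpleGraph.fromEdgeSet F :=
    ⟨Subtype.val, fun {u v} h ↦ ⟨not_not.1 h.2, h.1.ne⟩⟩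
  rw [← hT]
  exact ncard_edgeSet_add_one_le_of_isAcyclic (hF.comap f Subtype.val_injective) hne hfin

end Forest

section Spanning

theorem ncard_le_mul_ncard_of_fiberwise {α κ R : Type*} [Semiring R] [PartialOrder R]
    [IsOrderedAddMonoid R] {s t : Set α} (hs : s.Finite) (ht : t.Finite) (f : α → κ) {a : R}
    (h : ∀ c, ({x ∈ s | f x = c}.ncard : R) ≤ a * {x ∈ t | f x = c}.ncard) :
    (s.ncard : R) ≤ a * t.ncard := by
  classical
  lift s to Finset α using hs
  lift t to Finset α using ht
  simp only [Finset.mem_coe, ← Finset.coe_filter, Set.ncard_coe_finset] at h ⊢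
  have hs : Set.MapsTo f s ((s ∪ t).image f) := fun x hx ↦
    Finset.mem_image_of_mem f (Finset.mem_union_left t hx)
  have ht : Set.MapsTo f t ((s ∪ t).image f) := fun x hx ↦
    Finset.mem_image_of_mem f (Finset.mem_union_right s hx)
  rw [Finset.card_eq_sum_card_fiberwise hs, Finset.card_eq_sum_card_fiberwise ht]
  push_cast
  rw [Finset.mul_sum]
  exact Finset.sum_le_sum fun c _ ↦ h c

/- `e.out.1` is an arbitrary endpoint of `e`; by `hreach` the other one is in the same component. -/
theorem setOf_mem_edgeSet_connectedComponentMk_eq {F L : SimpleGraph V}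
    (hreach : ∀ ⦃u v⦄, L.Adj u v → F.Reachable u v) (c : F.ConnectedComponent) :
    {e ∈ L.edgeSet | F.connectedComponentMk e.out.1 = c} =
      ((⊤ : L.Subgraph).induce c.supp).edgeSet := by
  ext e
  rw [Set.mem_ofPred_eq]
  have hout : e.out.1 ∈ e := e.out_fst_mem
  generalize e.out.1 = w at hout
  induction e with | _ u v
  simp only [SimpleGraph.mem_edgeSet, SimpleGraph.Subgraph.mem_edgeSet,
    SimpleGraph.Subgraph.induce_adj, SimpleGraph.Subgraph.top_adj,
    SimpleGraph.ConnectedComponent.mem_supp_iff]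
  have hw : L.Adj u v → F.connectedComponentMk w = F.connectedComponentMk u ∧
      F.connectedComponentMk u = F.connectedComponentMk v := fun huv ↦ by
    have huv' := SimpleGraph.ConnectedComponent.eq.2 (hreach huv)
    rcases Sym2.mem_iff.1 hout with rfl | rfl
    exacts [⟨rfl, huv'⟩, ⟨huv'.symm, huv'⟩]
  grind

theorem ncard_edgeSet_le_fracArboricity_mul_of_reachable {F G : SimpleGraph V} [Finite G.edgeSet]
    (hFG : F ≤ G) (hreach : ∀ ⦃u v⦄, G.Adj u v → F.Reachable u v) :
    (G.edgeSet.ncard : ℝ) ≤ fracArboricity G * F.edgeSet.ncard := by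
  have hG : G.edgeSet.Finite := G.edgeSet.toFinite
  refine ncard_le_mul_ncard_of_fiberwise hG (hG.subset (SimpleGraph.edgeSet_mono hFG))
    (fun e ↦ F.connectedComponentMk e.out.1) fun c ↦ ?_
  rw [setOf_mem_edgeSet_connectedComponentMk_eq hreach,
    setOf_mem_edgeSet_connectedComponentMk_eq fun _ _ h ↦ h.reachable]
  let H : G.Subgraph := (⊤ : G.Subgraph).induce c.supp
  have hH : H.Connected := ⟨by
    rw [← SimpleGraph.induce_eq_coe_induce_top]
    exact c.connected_toSimpleGraph.mono (SimpleGraph.comap_monotone _ hFG)⟩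
  have hF : (H.verts.ncard : ℝ) ≤ c.toSubgraph.edgeSet.ncard + 1 := by
    exact_mod_cast ncard_verts_le_of_connected c.connected_toSubgraph
  calc (H.edgeSet.ncard : ℝ) ≤ fracArboricity G * ((H.verts.ncard : ℝ) - 1) :=
        ncard_edgeSet_le_fracArboricity_mul hH
    _ ≤ fracArboricity G * c.toSubgraph.edgeSet.ncard :=
        mul_le_mul_of_nonneg_left (by linarith) (fracArboricity_nonneg G)

theorem IsForestEdgeSet.exists_superset_ncard_le {G : SimpleGraph V} [Finite G.edgeSet]
    {F S : Set (Sym2 V)} (hF : IsForestEdgeSet F) (hFS : F ⊆ S) (hS : S ⊆ G.edgeSet) :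
    ∃ T, F ⊆ T ∧ T ⊆ S ∧ IsForestEdgeSet T ∧
      (S.ncard : ℝ) ≤ fracArboricity G * T.ncard := by
  obtain ⟨T, hFT, hTS, hT, hreach⟩ :=
    SimpleGraph.exists_isAcyclic_reachable_eq_le_of_le_of_isAcyclic
      (SimpleGraph.fromEdgeSet_mono hFS) hF
  have hedge : ∀ {S' : Set (Sym2 V)}, S' ⊆ S → (SimpleGraph.fromEdgeSet S').edgeSet = S' :=
    fun h ↦ by
      rw [SimpleGraph.edgeSet_fromEdgeSet]
      exact sdiff_eq_left.2 (Set.disjoint_left.2 fun e he ↦ G.not_isDiag_of_mem_edgeSet (hS (h he)))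
  have hSG : SimpleGraph.fromEdgeSet S ≤ G := by
    rwa [← SimpleGraph.edgeSet_subset_edgeSet, hedge subset_rfl]
  refine ⟨T.edgeSet, ?_, ?_, ?_, ?_⟩
  · exact hedge hFS ▸ SimpleGraph.edgeSet_mono hFT
  · exact hedge subset_rfl ▸ SimpleGraph.edgeSet_mono hTS
  · rwa [IsForestEdgeSet, SimpleGraph.fromEdgeSet_edgeSet]
  have : Finite (SimpleGraph.fromEdgeSet S).edgeSet :=
    (G.edgeSet.toFinite.subset (SimpleGraph.edgeSet_mono hSG)).to_subtype
  have hle := ncard_edgeSet_le_fracArboricity_mul_of_reachable hTS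
    fun u v h ↦ hreach ▸ h.reachable
  rw [hedge subset_rfl] at hle
  exact hle.trans (mul_le_mul_of_nonneg_right (fracArboricity_mono hSG) (Nat.cast_nonneg _))

theorem sum_eq_sum_filter_lt_add_mul_card {α R : Type*} [Ring R] [LinearOrder R] {S : Finset α}
    {x : α → R} {t : R} (h : ∀ e ∈ S, t ≤ x e) :
    ∑ e ∈ S, x e = ∑ e ∈ S with t < x e, (x e - t) + t * S.card := by
  have hfilter : ∑ e ∈ S with t < x e, (x e - t) = ∑ e ∈ S, (x e - t) :=
    Finset.sum_filter_of_ne fun e he hne ↦ (h e he).lt_of_ne' (sub_ne_zero.1 hne)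
  rw [hfilter, Finset.sum_sub_distrib, Finset.sum_const, nsmul_eq_mul, Nat.cast_comm,
    sub_add_cancel]

/- Greedy peeling: subtract the minimum weight `t` from all weights and apply induction to the edges
that keep a positive weight. Extending the resulting forest to a spanning forest `F` of `S` also
pays for the removed layer, since `S` has at most `fracArboricity G * F.card` edges. -/
theorem exists_isForestEdgeSet_sum_le {G : SimpleGraph V} [Finite G.edgeSet]
    {x : Sym2 V → ℝ} {S : Finset (Sym2 V)} (hS : (S : Set (Sym2 V)) ⊆ G.edgeSet)
    (hx : ∀ e ∈ S, 0 ≤ x e) :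
    ∃ F ⊆ S, IsForestEdgeSet (F : Set (Sym2 V)) ∧
      ∑ e ∈ S, x e ≤ fracArboricity G * ∑ e ∈ F, x e := by
  classical
  induction S using Finset.strongInduction generalizing x with | _ S ih
  rcases S.eq_empty_or_nonempty with rfl | hne
  · exact ⟨∅, subset_rfl, by simp [IsForestEdgeSet], by simp⟩
  obtain ⟨e₀, he₀, hmin⟩ := S.exists_min_image x hne
  let t := x e₀
  let S' := {e ∈ S | t < x e}
  have hS'S : S' ⊂ S := Finset.filter_ssubset.2 ⟨e₀, he₀, lt_irrefl t⟩
  obtain ⟨F', hF'S', hF', hle⟩ := ih S' hS'S (x := fun e ↦ x e - t)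
    ((Finset.coe_subset.2 hS'S.subset).trans hS)
    fun e he ↦ sub_nonneg.2 (Finset.mem_filter.1 he).2.le
  obtain ⟨F, hF'F, hFS, hF, hcard⟩ :=
    hF'.exists_superset_ncard_le (Finset.coe_subset.2 (hF'S'.trans hS'S.subset)) hS
  lift F to Finset (Sym2 V) using S.finite_toSet.subset hFS
  rw [Set.ncard_coe_finset, Set.ncard_coe_finset] at hcard
  norm_cast at hF'F hFS
  refine ⟨F, hFS, hF, ?_⟩
  have hFF' : ∑ e ∈ F', (x e - t) ≤ ∑ e ∈ F, (x e - t) :=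
    Finset.sum_le_sum_of_subset_of_nonneg hF'F fun e he _ ↦ sub_nonneg.2 (hmin e (hFS he))
  calc ∑ e ∈ S, x e
      = ∑ e ∈ S', (x e - t) + t * S.card := sum_eq_sum_filter_lt_add_mul_card hmin
    _ ≤ fracArboricity G * ∑ e ∈ F, (x e - t) + t * (fracArboricity G * F.card) :=
        add_le_add (hle.trans (mul_le_mul_of_nonneg_left hFF' (fracArboricity_nonneg G)))
          (mul_le_mul_of_nonneg_left hcard (hx e₀ he₀))
    _ = fracArboricity G * ∑ e ∈ F, x e := by
        rw [Finset.sum_sub_distrib, Finset.sum_const, nsmul_eq_mul]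
        ring

end Spanning

section Packing

/-- Nonnegative edge weights of `G` under which every forest weighs at most one: the feasible
points of the linear program dual to fractionally covering the edges of `G` by forests. -/
structure IsForestPacking (G : SimpleGraph V) (x : Sym2 V → ℝ) : Prop where
  nonneg : ∀ e, 0 ≤ x e
  finsum_mem_le_one : ∀ F ⊆ G.edgeSet, IsForestEdgeSet F → ∑ᶠ e ∈ F, x e ≤ 1

variable {G : SimpleGraph V} [Finite G.edgeSet] {x : Sym2 V → ℝ}

theorem IsForestPacking.finsum_mem_le_arboricity (hx : IsForestPacking G x) {S : Set (Sym2 V)}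
    (hS : S ⊆ G.edgeSet) : ∑ᶠ e ∈ S, x e ≤ arboricity S := by
  classical
  obtain ⟨F, hF, hSF⟩ := exists_isForestEdgeSet_cover (G.edgeSet.toFinite.subset hS)
  lift S to Finset (Sym2 V) using G.edgeSet.toFinite.subset hS
  have hcover : ∀ e ∈ S, x e ≤ ∑ i, if e ∈ F i then x e else 0 := by
    intro e he
    obtain ⟨i, hi⟩ := Set.mem_iUnion.1 (hSF he)
    have hnonneg : ∀ j ∈ Finset.univ, 0 ≤ if e ∈ F j then x e else 0 := fun j _ ↦ by
      split_ifs
      exacts [hx.nonneg e, le_rfl]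
    simpa only [if_pos hi] using Finset.single_le_sum hnonneg (Finset.mem_univ i)
  have hforest : ∀ i, (∑ e ∈ S with e ∈ F i, x e) ≤ 1 := by
    intro i
    rw [← finsum_mem_coe_finset]
    refine hx.finsum_mem_le_one _ (fun e he ↦ hS ?_) ((hF i).mono fun e he ↦ ?_)
    exacts [(Finset.mem_filter.1 he).1, (Finset.mem_filter.1 he).2]
  calc ∑ᶠ e ∈ (S : Set (Sym2 V)), x e = ∑ e ∈ S, x e := finsum_mem_coe_finset x S
    _ ≤ ∑ e ∈ S, ∑ i, if e ∈ F i then x e else 0 := Finset.sum_le_sum hcover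
    _ = ∑ i, ∑ e ∈ S with e ∈ F i, x e := by
        simp only [Finset.sum_comm (s := S), Finset.sum_filter]
    _ ≤ ∑ _i : Fin (arboricity (S : Set (Sym2 V))), (1 : ℝ) :=
        Finset.sum_le_sum fun i _ ↦ hforest i
    _ = arboricity (S : Set (Sym2 V)) := by simp

theorem inCore_iff_isForestPacking :
    inCore G x ↔ IsForestPacking G x ∧ ∑ᶠ e ∈ G.edgeSet, x e = arboricity G.edgeSet := by
  constructor
  · rintro ⟨hnonneg, htotal, hle⟩
    refine ⟨⟨hnonneg, fun F hFG hF ↦ (hle F hFG).trans ?_⟩, htotal⟩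
    exact_mod_cast hF.arboricity_le_one
  · rintro ⟨hx, htotal⟩
    exact ⟨hx.nonneg, htotal, fun S hS ↦ hx.finsum_mem_le_arboricity hS⟩

theorem IsForestPacking.finsum_edgeSet_le_fracArboricity (hx : IsForestPacking G x) :
    ∑ᶠ e ∈ G.edgeSet, x e ≤ fracArboricity G := by
  have hE : G.edgeSet.Finite := G.edgeSet.toFinite
  obtain ⟨F, hFE, hF, hle⟩ := exists_isForestEdgeSet_sum_le (x := x) hE.coe_toFinset.subset
    fun e _ ↦ hx.nonneg e
  rw [Set.Finite.subset_toFinset] at hFE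
  rw [finsum_mem_eq_finite_toFinset_sum x hE]
  refine hle.trans (mul_le_of_le_one_right (fracArboricity_nonneg G) ?_)
  simpa only [finsum_mem_coe_finset] using hx.finsum_mem_le_one F hFE hF

theorem finsum_mem_indicator_const {α R : Type*} [NonAssocSemiring R] {S T : Set α}
    (hST : (S ∩ T).Finite) (w : R) :
    ∑ᶠ e ∈ S, T.indicator (fun _ ↦ w) e = (S ∩ T).ncard * w := by
  rw [finsum_mem_def, Set.indicator_indicator, ← finsum_mem_def,
    finsum_mem_eq_finite_toFinset_sum _ hST, Finset.sum_const, nsmul_eq_mul,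
    Set.ncard_eq_toFinset_card _ hST]

variable (G) in
theorem exists_isForestPacking_finsum_eq_fracArboricity [Nonempty V] :
    ∃ x, IsForestPacking G x ∧ ∑ᶠ e ∈ G.edgeSet, x e = fracArboricity G := by
  obtain ⟨H, hH, hdensest⟩ := exists_isDensest G
  have hE : H.edgeSet.Finite := G.edgeSet.toFinite.subset H.edgeSet_subset
  have hn : (1 : ℝ) ≤ H.verts.ncard := by exact_mod_cast one_le_ncard_verts_of_connected hH
  refine ⟨H.edgeSet.indicator fun _ ↦ ((H.verts.ncard : ℝ) - 1)⁻¹, ⟨?_, ?_⟩, ?_⟩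
  · exact fun e ↦ Set.indicator_nonneg (fun _ _ ↦ inv_nonneg.2 (sub_nonneg.2 hn)) e
  · intro F _ hF
    have hcard : ((F ∩ H.edgeSet).ncard : ℝ) + 1 ≤ H.verts.ncard := by
      exact_mod_cast hF.ncard_inter_edgeSet_add_one_le hH.nonempty
        (finite_verts_of_connected hH hE)
    rw [finsum_mem_indicator_const (hE.inter_of_right _), ← div_eq_mul_inv]
    exact div_le_one_of_le₀ (by linarith) (sub_nonneg.2 hn)
  · rw [finsum_mem_indicator_const (hE.inter_of_right _),
      Set.inter_eq_right.2 H.edgeSet_subset, ← div_eq_mul_inv, ← hdensest, density]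

end Packing

theorem core_nonempty_iff_fracArboricity_eq_general [Nonempty V] (G : SimpleGraph V)
    [Finite G.edgeSet] :
    (∃ x : Sym2 V → ℝ, inCore G x) ↔ fracArboricity G = (arboricity G.edgeSet : ℝ) := by
  simp only [inCore_iff_isForestPacking]
  obtain ⟨y, hy, hytotal⟩ := exists_isForestPacking_finsum_eq_fracArboricity G
  constructor
  · rintro ⟨x, hx, hxtotal⟩
    exact le_antisymm (hytotal ▸ hy.finsum_mem_le_arboricity subset_rfl)
      (hxtotal ▸ hx.finsum_edgeSet_le_fracArboricity)
  · exact fun h ↦ ⟨y, hy, hytotal.trans h⟩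

/-- the core of the arboricity game is nonempty iff the fractional
arboricity equals the arboricity. -/
theorem core_nonempty_iff_fracArboricity_eq [Fintype V] (G : SimpleGraph V)
    (hG : G.Connected) :
    (∃ x : Sym2 V → ℝ, inCore G x) ↔
      fracArboricity G = (arboricity G.edgeSet : ℝ) :=
  have := hG.nonempty
  core_nonempty_iff_fracArboricity_eq_general G
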